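/- Let I ⊆ ℝ[x,y] be an ideal such that the semiring Σ_h + I is archimedean, and let p_1, …, p_r ∈ ℝ[x,y]. Then the hermitian module M = I + Σ_h + p_1·Σ_h + ⋯ + p_r·Σ_h has the Quillen property (Q): M contains every f ∈ ℝ[x,y] that is strictly positive on X_M = V_ℝ(I) ∩ {a ∈ ℂⁿ : p_1(a) ≥ 0, …, p_r(a) ≥ 0}. -/

import Mathlib

open MvPolynomial Complex Matrix MeasureTheory ComplexOrder

noncomputable section

universe u

/-- `ℂ[z,z̄]`: the polynomial ring in the `2n` variables `z_j` (encoded `Sum.inl j`)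
and `z̄_j` (encoded `Sum.inr j`). -/
abbrev CPoly (n : ℕ) := MvPolynomial (Fin n ⊕ Fin n) ℂ

/-- The involution `f ↦ f*`: conjugate the coefficients and swap `z_j ↔ z̄_j`. -/
def hermStar (n : ℕ) : CPoly n →+* CPoly n :=
  (MvPolynomial.rename (Sum.swap : Fin n ⊕ Fin n → Fin n ⊕ Fin n)).toRingHom.comp
    (MvPolynomial.map (starRingEnd ℂ))

/-- The inclusion of the holomorphic polynomials `ℂ[z]` into `ℂ[z,z̄]`. -/
def hol (n : ℕ) : MvPolynomial (Fin n) ℂ →ₐ[ℂ] CPoly n :=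
  MvPolynomial.rename Sum.inl

/-- Evaluation `f(a,b)` (substituting `a` for `z` and `b` for `z̄`). -/
def evalPair {n : ℕ} (a b : Fin n → ℂ) (f : CPoly n) : ℂ :=
  MvPolynomial.eval (Sum.elim a b) f

/-- Evaluation `f(a) := f(a, ā)`. -/
def evalAt {n : ℕ} (a : Fin n → ℂ) (f : CPoly n) : ℂ :=
  evalPair a (fun j => (starRingEnd ℂ) (a j)) f

/-- `‖z‖² = |z_1|² + ⋯ + |z_n|²`. -/
def normZ (n : ℕ) : CPoly n := ∑ j : Fin n, X (Sum.inl j) * X (Sum.inr j)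

/-- `Σ_h`: hermitian sums of squares `∑ |p_i|²`, `p_i ∈ ℂ[z]` holomorphic. -/
def SigmaH (n : ℕ) : Set (CPoly n) :=
  {f | ∃ (k : ℕ) (p : Fin k → MvPolynomial (Fin n) ℂ),
    f = ∑ i, hol n (p i) * hermStar n (hol n (p i))}

/-- `Σ`: sums of squares `∑ |p_i|²`, `p_i ∈ ℂ[z,z̄]`. -/
def SigmaFull (n : ℕ) : Set (CPoly n) :=
  {f | ∃ (k : ℕ) (p : Fin k → CPoly n), f = ∑ i, p i * hermStar n (p i)}

/-- Ideals `I ⊆ ℝ[x,y]`, viewed as sets of `*`-fixed elements of `ℂ[z,z̄]`. -/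
def IsRealIdeal (n : ℕ) (I : Set (CPoly n)) : Prop :=
  (∀ f ∈ I, hermStar n f = f) ∧ (0 : CPoly n) ∈ I ∧
    (∀ f ∈ I, ∀ g ∈ I, f + g ∈ I) ∧
    ∀ f : CPoly n, hermStar n f = f → ∀ g ∈ I, f * g ∈ I

/-- The semiring `Σ_h + I`. -/
def SigmaHPlus (n : ℕ) (I : Set (CPoly n)) : Set (CPoly n) :=
  {f | ∃ s ∈ SigmaH n, ∃ g ∈ I, f = s + g}

/-- The real zero set `V_ℝ(I) ⊆ ℂⁿ`. -/
def VR (n : ℕ) (I : Set (CPoly n)) : Set (Fin n → ℂ) :=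
  {a | ∀ f ∈ I, evalAt a f = 0}

/-- A subset `M` of `ℝ[x,y]` is archimedean if for every real `f` there is `c ∈ ℝ`
with `c ± f ∈ M`. -/
def IsArchSet (n : ℕ) (M : Set (CPoly n)) : Prop :=
  ∀ f : CPoly n, hermStar n f = f →
    ∃ c : ℝ, (C (c : ℂ) + f) ∈ M ∧ (C (c : ℂ) - f) ∈ M

/-- Hermitian modules in `ℝ[x,y]`. -/
def IsHermitianModule (n : ℕ) (M : Set (CPoly n)) : Prop :=
  (∀ f ∈ M, hermStar n f = f) ∧ (1 : CPoly n) ∈ M ∧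
    (∀ f ∈ M, ∀ g ∈ M, f + g ∈ M) ∧
    ∀ s ∈ SigmaH n, ∀ f ∈ M, s * f ∈ M

/-- The closed set `X_M ⊆ ℂⁿ` associated with a hermitian module. -/
def XM (n : ℕ) (M : Set (CPoly n)) : Set (Fin n → ℂ) :=
  {a | ∀ g ∈ M, 0 ≤ (evalAt a g).re}

/-- Hereditary calculus `ψ_T` for a tuple of bounded operators:
`ψ_T(z^α z̄^β) = T^{*β} T^α` (adjoints to the left). -/
def psiOp {n : ℕ} {E : Type u} [NormedAddCommGroup E] [InnerProductSpace ℂ E]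
    [CompleteSpace E] (T : Fin n → E →L[ℂ] E) (f : CPoly n) : E →L[ℂ] E :=
  ∑ m ∈ f.support, f.coeff m •
    ((List.ofFn fun j => (ContinuousLinearMap.adjoint (T j)) ^ (m (Sum.inr j))).prod *
     (List.ofFn fun j => (T j) ^ (m (Sum.inl j))).prod)

/-- Hereditary calculus `ψ_T` for a tuple of matrices. -/
def psiMat {n m : ℕ} (T : Fin n → Matrix (Fin m) (Fin m) ℂ) (f : CPoly n) :
    Matrix (Fin m) (Fin m) ℂ :=
  ∑ mo ∈ f.support, f.coeff mo •
    ((List.ofFn fun j => ((T j)ᴴ) ^ (mo (Sum.inr j))).prod *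
     (List.ofFn fun j => (T j) ^ (mo (Sum.inl j))).prod)

/-- A commuting tuple `T` on a Hilbert space `E` is subnormal if it extends to a
commuting tuple of bounded normal operators on a larger Hilbert space `E'`,
leaving (the image of) `E` invariant. -/
def IsSubnormal {n : ℕ} {E : Type u} [NormedAddCommGroup E] [InnerProductSpace ℂ E]
    [CompleteSpace E] (T : Fin n → E →L[ℂ] E) : Prop :=
  ∃ (E' : Type u) (_ : NormedAddCommGroup E') (_ : InnerProductSpace ℂ E')
    (_ : CompleteSpace E') (ι : E →ₗᵢ[ℂ] E') (N : Fin n → E' →L[ℂ] E'),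
      (∀ i j, Commute (N i) (N j)) ∧
      (∀ j, Commute (N j) (ContinuousLinearMap.adjoint (N j))) ∧
      ∀ j x, N j (ι x) = ι (T j x)

/-- The "diamond" ideal `I(a,b)`. -/
def Iab {n : ℕ} (a b : Fin n → ℂ) : Set (CPoly n) :=
  {f | evalPair a (fun j => (starRingEnd ℂ) (a j)) f = 0 ∧
       evalPair a (fun j => (starRingEnd ℂ) (b j)) f = 0 ∧
       evalPair b (fun j => (starRingEnd ℂ) (a j)) f = 0 ∧
       evalPair b (fun j => (starRingEnd ℂ) (b j)) f = 0}

/-- The degenerate ideal `J(a,U)`. -/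
def Jau {n : ℕ} (a : Fin n → ℂ) (U : Matrix (Fin n) (Fin n) ℂ) : Set (CPoly n) :=
  {f | evalAt a f = 0 ∧
    U.mulVec (fun k => evalAt a (pderiv (Sum.inl k) f)) = 0 ∧
    (U.map (starRingEnd ℂ)).mulVec (fun k => evalAt a (pderiv (Sum.inr k) f)) = 0 ∧
    Matrix.trace
      (U * Matrix.of fun j k => evalAt a (pderiv (Sum.inr k) (pderiv (Sum.inl j) f))) = 0}

/-!
A polynomial `f` outside the hermitian module `M` is separated from the cone `M` by a state, i.e. a
linear functional `L ≥ 0` on `M` with `L 1 = 1`, such that `L f ≤ 0`. The archimedean property makes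
the state space compact, so `L` can be taken to be extreme by Krein–Milman. If multiplication by `t`
maps `M` into itself and `L t > 0`, then `g ↦ L (t * g) / L t` is again a state. For every real
polynomial `x` and large constants `c`, `d`, this applies to `c + x` and `d - x`, whose sum is
constant; so `L` is a convex combination of the two resulting states, and extremality gives
`L (x * g) = L x * L g`. Hence `L` is a character of `ℝ[x,y]`, i.e. evaluation at a point of `X_M`,
and `f ≤ 0` there.
-/

section OrderUnit

variable {E : Type*} [AddCommGroup E] [Module ℝ E] {K : PointedCone ℝ E} {e f : E}

/-- `e` is an order unit of the vector space `E` preordered by the cone `K`. -/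
structure IsOrderUnit (K : PointedCone ℝ E) (e : E) : Prop where
  mem : e ∈ K
  exists_smul_add_mem (x : E) : ∃ c : ℝ, c • e + x ∈ K

/-- The states of the cone `K` relative to `e`: the linear functionals that are nonnegative on `K`
and take the value `1` at `e`. They are encoded as plain functions, so that the state space carries
the topology of pointwise convergence. -/
def stateSpace (K : PointedCone ℝ E) (e : E) : Set (E → ℝ) :=
  {L | L ∈ Set.range ((↑) : (E →ₗ[ℝ] ℝ) → E → ℝ) ∧ L e = 1 ∧ ∀ x ∈ K, 0 ≤ L x}

theorem stateSpace_anti {K' : PointedCone ℝ E} (h : K ≤ K') : stateSpace K' e ⊆ stateSpace K e :=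
  fun _ hL => ⟨hL.1, hL.2.1, fun x hx => hL.2.2 x (h hx)⟩

theorem IsOrderUnit.mono {K' : PointedCone ℝ E} (he : IsOrderUnit K e) (h : K ≤ K') :
    IsOrderUnit K' e :=
  ⟨h he.mem, fun x => (he.exists_smul_add_mem x).imp fun _ hc => h hc⟩

theorem IsOrderUnit.mem_of_neg_mem (he : IsOrderUnit K e) (hneg : -e ∈ K) (x : E) : x ∈ K := by
  obtain ⟨c, hc⟩ := he.exists_smul_add_mem x
  have hline : -c • e ∈ K := by
    rcases le_total 0 c with h | h
    · simpa using K.smul_mem h hneg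
    · exact K.smul_mem (neg_nonneg.2 h) he.mem
  simpa using K.add_mem hline hc

theorem nonneg_of_smul_mem_of_neg_notMem (hneg : -e ∉ K) {c : ℝ} (hc : c • e ∈ K) : 0 ≤ c := by
  by_contra! hc₀
  refine hneg ((K.smul_mem_iff (neg_pos.2 hc₀)).1 ?_)
  rwa [smul_neg, neg_smul, neg_neg]

theorem IsOrderUnit.stateSpace_nonempty (he : IsOrderUnit K e) (hneg : -e ∉ K) :
    (stateSpace K e).Nonempty := by
  have he₀ : e ≠ 0 := by
    rintro rfl
    exact hneg (by simp)
  let F : E →ₗ.[ℝ] ℝ := LinearPMap.mkSpanSingleton e 1 he₀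
  have hF (c : ℝ) (hc : c • e ∈ F.domain) : F ⟨c • e, hc⟩ = c :=
    (LinearPMap.mkSpanSingleton'_apply (σ := RingHom.id ℝ) e (1 : ℝ) _ c hc).trans (mul_one c)
  have hmem (c : ℝ) : c • e ∈ F.domain := Submodule.mem_span_singleton.2 ⟨c, rfl⟩
  obtain ⟨L, hLF, hLK⟩ := riesz_extension K F
    (by
      rintro ⟨_, hx⟩ hxK
      obtain ⟨c, rfl⟩ := Submodule.mem_span_singleton.1 hx
      rw [hF]
      exact nonneg_of_smul_mem_of_neg_notMem hneg hxK)
    (fun x => (he.exists_smul_add_mem x).elim fun c hc => ⟨⟨c • e, hmem c⟩, hc⟩)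
  exact ⟨L, ⟨L, rfl⟩, (hLF _).trans (LinearPMap.mkSpanSingleton_apply ℝ ℝ he₀ 1), hLK⟩

theorem IsOrderUnit.exists_mem_stateSpace_nonpos (he : IsOrderUnit K e) (hf : f ∉ K) :
    ∃ L ∈ stateSpace K e, L f ≤ 0 := by
  let K' : PointedCone ℝ E := K ⊔ PointedCone.hull ℝ {-f}
  have hneg : -e ∉ K' := by
    intro h
    obtain ⟨m, hm, _, hy, hsum⟩ := Submodule.mem_sup.1 h
    obtain ⟨⟨l, hl⟩, rfl⟩ := Submodule.mem_span_singleton.1 hy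
    change m + l • -f = -e at hsum
    rcases hl.eq_or_lt with rfl | hl
    · refine hf (he.mem_of_neg_mem ?_ f)
      rwa [← hsum, zero_smul, add_zero]
    · have hlf : l • f = m + e := by
        rw [smul_neg, ← sub_eq_add_neg, sub_eq_iff_eq_add] at hsum
        rw [hsum]
        abel
      exact hf ((K.smul_mem_iff hl).1 (hlf ▸ K.add_mem hm he.mem))
  obtain ⟨L, hL⟩ := (he.mono le_sup_left).stateSpace_nonempty hneg
  obtain ⟨⟨φ, rfl⟩, -, hnonneg⟩ := id hL
  have := hnonneg (-f) (Submodule.mem_sup_right (PointedCone.subset_hull rfl))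
  exact ⟨φ, stateSpace_anti le_sup_left hL, by simpa using this⟩

theorem IsOrderUnit.isCompact_stateSpace (he : IsOrderUnit K e) : IsCompact (stateSpace K e) := by
  choose c hc using he.exists_smul_add_mem
  have hbox : IsCompact (Set.univ.pi fun x : E => Set.Icc (-c x) (c (-x))) :=
    isCompact_univ_pi fun _ => isCompact_Icc
  refine hbox.of_isClosed_subset ?_ ?_
  · have hpos : IsClosed {L : E → ℝ | ∀ x ∈ K, 0 ≤ L x} := by
      simp only [Set.ofPred_forall]
      exact isClosed_biInter fun x _ => isClosed_le continuous_const (continuous_apply x)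
    exact (LinearMap.isClosed_range_coe E ℝ (RingHom.id ℝ)).inter
      ((isClosed_eq (continuous_apply e) continuous_const).inter hpos)
  · rintro _ ⟨⟨φ, rfl⟩, hφe, hφ⟩ x -
    have hlower := hφ _ (hc x)
    have hupper := hφ _ (hc (-x))
    simp only [map_add, map_smul, map_neg, hφe, smul_eq_mul, mul_one] at hlower hupper
    constructor <;> linarith

end OrderUnit

theorem exists_mem_extremePoints_apply_le {V : Type*} [AddCommGroup V] [Module ℝ V]
    [TopologicalSpace V] [T2Space V] [IsTopologicalAddGroup V] [ContinuousSMul ℝ V]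
    [LocallyConvexSpace ℝ V] {S : Set V} (hS : IsCompact S) (l : V →L[ℝ] ℝ) {x : V} (hx : x ∈ S) :
    ∃ y ∈ S.extremePoints ℝ, l y ≤ l x := by
  obtain ⟨z, hzS, hz⟩ := hS.exists_isMinOn ⟨x, hx⟩ l.continuous.continuousOn
  have hface : IsExposed ℝ S ((-l).toExposed S) := ContinuousLinearMap.toExposed.isExposed
  obtain ⟨y, hy⟩ := (hface.isCompact hS).extremePoints_nonempty
    ⟨z, hzS, fun w hw => neg_le_neg (hz hw)⟩
  exact ⟨y, hface.isExtreme.extremePoints_subset_extremePoints hy, neg_le_neg_iff.1 (hy.1.2 x hx)⟩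

theorem IsOrderUnit.exists_mem_extremePoints_nonpos {E : Type*} [AddCommGroup E] [Module ℝ E]
    {K : PointedCone ℝ E} {e f : E} (he : IsOrderUnit K e) (hf : f ∉ K) :
    ∃ L ∈ (stateSpace K e).extremePoints ℝ, L f ≤ 0 := by
  obtain ⟨L₀, hL₀, hL₀f⟩ := he.exists_mem_stateSpace_nonpos hf
  obtain ⟨L, hL, hLL₀⟩ := exists_mem_extremePoints_apply_le he.isCompact_stateSpace
    (ContinuousLinearMap.proj (R := ℝ) (φ := fun _ : E => ℝ) f) hL₀
  exact ⟨L, hL, hLL₀.trans hL₀f⟩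

section PureState

variable {A : Type*} [CommRing A] [Algebra ℝ A] {M : PointedCone ℝ A}

theorem mul_left_div_mem_stateSpace {φ : A →ₗ[ℝ] ℝ} (hφ : ⇑φ ∈ stateSpace M 1) {t : A}
    (ht : ∀ m ∈ M, t * m ∈ M) (hφt : 0 < φ t) :
    (fun g => (φ t)⁻¹ * φ (t * g)) ∈ stateSpace M 1 := by
  refine ⟨⟨(φ t)⁻¹ • φ ∘ₗ LinearMap.mulLeft ℝ t, rfl⟩, ?_, fun m hm => ?_⟩
  · simp [hφt.ne']
  · exact mul_nonneg (inv_nonneg.2 hφt.le) (hφ.2.2 _ (ht m hm))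

theorem map_mul_of_mem_extremePoints_of_add_eq {φ : A →ₗ[ℝ] ℝ}
    (hφ : ⇑φ ∈ (stateSpace M 1).extremePoints ℝ) {t t' : A}
    (ht : ∀ m ∈ M, t * m ∈ M) (ht' : ∀ m ∈ M, t' * m ∈ M) (hφt : 0 < φ t) (hφt' : 0 < φ t')
    {c : ℝ} (hc : t + t' = algebraMap ℝ A c) (g : A) : φ (t * g) = φ t * φ g := by
  have hφ1 : φ 1 = 1 := hφ.1.2.1
  have hsum : φ t + φ t' = c := by
    rw [← map_add, hc, Algebra.algebraMap_eq_smul_one, map_smul, hφ1, smul_eq_mul, mul_one]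
  have hc₀ : 0 < c := hsum ▸ add_pos hφt hφt'
  have hseg : ⇑φ ∈ openSegment ℝ (fun g => (φ t)⁻¹ * φ (t * g))
      (fun g => (φ t')⁻¹ * φ (t' * g)) := by
    refine ⟨φ t / c, φ t' / c, by positivity, by positivity,
      by rw [← add_div, hsum, div_self hc₀.ne'], funext fun g => ?_⟩
    have hg : φ (t * g) + φ (t' * g) = c * φ g := by
      rw [← map_add, ← add_mul, hc, ← Algebra.smul_def, map_smul, smul_eq_mul]
    simp only [Pi.add_apply, Pi.smul_apply, smul_eq_mul]
    field_simp
    exact hg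
  have := congrFun (hφ.2 (mul_left_div_mem_stateSpace hφ.1 ht hφt)
    (mul_left_div_mem_stateSpace hφ.1 ht' hφt') hseg) g
  exact (inv_mul_eq_iff_eq_mul₀ hφt.ne').1 this

theorem map_mul_of_mem_extremePoints (h1 : (1 : A) ∈ M)
    (harch : ∀ x : A, ∃ c : ℝ, ∀ m ∈ M, (algebraMap ℝ A c + x) * m ∈ M)
    {φ : A →ₗ[ℝ] ℝ} (hφ : ⇑φ ∈ (stateSpace M 1).extremePoints ℝ) (x y : A) :
    φ (x * y) = φ x * φ y := by
  have hφ1 : φ 1 = 1 := hφ.1.2.1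
  have hφC (c : ℝ) : φ (algebraMap ℝ A c) = c := by
    rw [Algebra.algebraMap_eq_smul_one, map_smul, hφ1, smul_eq_mul, mul_one]
  have hpos (x : A) : ∃ c : ℝ, (∀ m ∈ M, (algebraMap ℝ A c + x) * m ∈ M) ∧
      0 < φ (algebraMap ℝ A c + x) := by
    obtain ⟨c, hc⟩ := harch x
    have hnonneg : 0 ≤ φ (algebraMap ℝ A c + x) := by
      simpa using hφ.1.2.2 _ (hc 1 h1)
    refine ⟨c + 1, fun m hm => ?_, ?_⟩
    · convert M.add_mem (hc m hm) hm using 1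
      rw [map_add, map_one]
      ring
    · rw [map_add, hφC] at hnonneg ⊢
      linarith
  obtain ⟨c, ht, hφt⟩ := hpos x
  obtain ⟨d, ht', hφt'⟩ := hpos (-x)
  have := map_mul_of_mem_extremePoints_of_add_eq hφ ht ht' hφt hφt' (c := c + d)
    (by rw [map_add]; ring) y
  rw [add_mul, map_add, map_add, hφC, ← Algebra.smul_def, map_smul, smul_eq_mul] at this
  linarith

theorem mem_of_forall_algHom_pos (h1 : (1 : A) ∈ M)
    (harch : ∀ x : A, ∃ c : ℝ, ∀ m ∈ M, (algebraMap ℝ A c + x) * m ∈ M) {f : A}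
    (hf : ∀ φ : A →ₐ[ℝ] ℝ, (∀ m ∈ M, 0 ≤ φ m) → 0 < φ f) : f ∈ M := by
  by_contra hfM
  have hunit : IsOrderUnit M 1 := ⟨h1, fun x => (harch x).imp fun c hc => by
    simpa [Algebra.algebraMap_eq_smul_one] using hc 1 h1⟩
  obtain ⟨_, hL, hLf⟩ := hunit.exists_mem_extremePoints_nonpos hfM
  obtain ⟨⟨φ, rfl⟩, hφ1, hφM⟩ := hL.1
  exact (hf (AlgHom.ofLinearMap φ hφ1 (map_mul_of_mem_extremePoints h1 harch hL)) hφM).not_ge hLf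

end PureState

section RealPolynomials

variable {n : ℕ}

theorem hermStar_C (c : ℂ) : hermStar n (C c) = C ((starRingEnd ℂ) c) := by
  simp [hermStar]

theorem hermStar_X (i : Fin n ⊕ Fin n) : hermStar n (X i) = X i.swap := by
  simp [hermStar]

theorem hermStar_hermStar (f : CPoly n) : hermStar n (hermStar n f) = f := by
  induction f using MvPolynomial.induction_on with
  | C c => simp only [hermStar_C, conj_conj]
  | add f g hf hg => rw [map_add, map_add, hf, hg]
  | mul_X f i hf => simp only [map_mul, hermStar_X, Sum.swap_swap, hf]

theorem evalAt_C (a : Fin n → ℂ) (c : ℂ) : evalAt a (C c) = c :=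
  eval_C c

theorem evalAt_X_inl (a : Fin n → ℂ) (j : Fin n) : evalAt a (X (Sum.inl j)) = a j :=
  eval_X _

theorem evalAt_X_inr (a : Fin n → ℂ) (j : Fin n) :
    evalAt a (X (Sum.inr j)) = (starRingEnd ℂ) (a j) :=
  eval_X _

theorem evalAt_add (a : Fin n → ℂ) (f g : CPoly n) : evalAt a (f + g) = evalAt a f + evalAt a g :=
  map_add (eval _) f g

theorem evalAt_mul (a : Fin n → ℂ) (f g : CPoly n) : evalAt a (f * g) = evalAt a f * evalAt a g :=
  map_mul (eval _) f g

theorem evalAt_sub (a : Fin n → ℂ) (f g : CPoly n) : evalAt a (f - g) = evalAt a f - evalAt a g :=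
  map_sub (eval _) f g

theorem evalAt_sum (a : Fin n → ℂ) {ι : Type*} (s : Finset ι) (f : ι → CPoly n) :
    evalAt a (∑ i ∈ s, f i) = ∑ i ∈ s, evalAt a (f i) :=
  map_sum (eval _) f s

theorem evalAt_hermStar (a : Fin n → ℂ) (f : CPoly n) :
    evalAt a (hermStar n f) = (starRingEnd ℂ) (evalAt a f) := by
  induction f using MvPolynomial.induction_on with
  | C c => simp only [hermStar_C, evalAt_C]
  | add f g hf hg => rw [map_add, evalAt_add, evalAt_add, map_add, hf, hg]
  | mul_X f i hf =>
    rw [map_mul, evalAt_mul, evalAt_mul, map_mul, hf, hermStar_X]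
    rcases i with j | j
    · rw [Sum.swap_inl, evalAt_X_inl, evalAt_X_inr]
    · rw [Sum.swap_inr, evalAt_X_inl, evalAt_X_inr, conj_conj]

theorem evalAt_eq_re {f : CPoly n} (hf : hermStar n f = f) (a : Fin n → ℂ) :
    evalAt a f = ((evalAt a f).re : ℂ) :=
  (conj_eq_iff_re.1 (by rw [← evalAt_hermStar, hf])).symm

/-- The inclusion of `ℝ[x,y]` into `ℂ[z,z̄]`. The variables `x_j` and `y_j` are encoded as
`Sum.inl j` and `Sum.inr j`, and are sent to `(z_j + z̄_j)/2` and `(z_j - z̄_j)/(2i)`. -/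
def realHom (n : ℕ) : MvPolynomial (Fin n ⊕ Fin n) ℝ →ₐ[ℝ] CPoly n :=
  aeval (Sum.elim (fun j => C (1 / 2) * (X (Sum.inl j) + X (Sum.inr j)))
    (fun j => C (1 / (2 * I)) * (X (Sum.inl j) - X (Sum.inr j))))

theorem realHom_C (c : ℝ) : realHom n (C c) = C (c : ℂ) := by
  simp [realHom, MvPolynomial.algebraMap_eq, IsScalarTower.algebraMap_apply ℝ ℂ (CPoly n)]

theorem realHom_X_inl (j : Fin n) :
    realHom n (X (Sum.inl j)) = C (1 / 2) * (X (Sum.inl j) + X (Sum.inr j)) := by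
  simp only [realHom, aeval_X, Sum.elim_inl]

theorem realHom_X_inr (j : Fin n) :
    realHom n (X (Sum.inr j)) = C (1 / (2 * I)) * (X (Sum.inl j) - X (Sum.inr j)) := by
  simp only [realHom, aeval_X, Sum.elim_inr]

theorem realHom_X_inl_add_I_mul_realHom_X_inr (j : Fin n) :
    realHom n (X (Sum.inl j)) + C I * realHom n (X (Sum.inr j)) = X (Sum.inl j) := by
  have hI : I * (1 / (2 * I)) = 1 / 2 := by
    field_simp
  have hhalf : (C (1 / 2) + C (1 / 2) : CPoly n) = 1 := by
    rw [← C_add, add_halves, C_1]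
  rw [realHom_X_inl, realHom_X_inr, ← mul_assoc, ← C_mul, hI]
  linear_combination X (Sum.inl j) * hhalf

theorem hermStar_realHom (q : MvPolynomial (Fin n ⊕ Fin n) ℝ) :
    hermStar n (realHom n q) = realHom n q := by
  have htwo : (starRingEnd ℂ) 2 = 2 := map_ofNat _ 2
  induction q using MvPolynomial.induction_on with
  | C c => rw [realHom_C, hermStar_C, conj_ofReal]
  | add q q' hq hq' => rw [map_add, map_add, hq, hq']
  | mul_X q i hq =>
    rw [map_mul, map_mul, hq]
    congr 1
    rcases i with j | j
    · rw [realHom_X_inl, map_mul, map_add, hermStar_C, hermStar_X, hermStar_X, map_div₀, map_one,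
        htwo, add_comm]
      rfl
    · rw [realHom_X_inr, map_mul, map_sub, hermStar_C, hermStar_X, hermStar_X, map_div₀, map_one,
        map_mul, htwo, conj_I, mul_neg, div_neg, C_neg, neg_mul, ← mul_neg, neg_sub]
      rfl

theorem exists_realHom_add_I_mul_realHom (f : CPoly n) :
    ∃ u v, f = realHom n u + C I * realHom n v := by
  have hI : (C I * C I : CPoly n) = -1 := by
    rw [← C_mul, I_mul_I, C_neg, C_1]
  induction f using MvPolynomial.induction_on with
  | C c =>
    refine ⟨C c.re, C c.im, ?_⟩
    rw [realHom_C, realHom_C, ← C_mul, ← C_add, mul_comm, re_add_im]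
  | add f g hf hg =>
    obtain ⟨u, v, rfl⟩ := hf
    obtain ⟨u', v', rfl⟩ := hg
    refine ⟨u + u', v + v', ?_⟩
    rw [map_add, map_add]
    ring
  | mul_X f i hf =>
    obtain ⟨u, v, rfl⟩ := hf
    obtain ⟨x, y, hX⟩ : ∃ x y, X i = realHom n x + C I * realHom n y := by
      rcases i with j | j
      · exact ⟨_, _, (realHom_X_inl_add_I_mul_realHom_X_inr j).symm⟩
      · refine ⟨X (Sum.inl j), -X (Sum.inr j), ?_⟩
        have := congrArg (hermStar n) (realHom_X_inl_add_I_mul_realHom_X_inr j)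
        rw [map_add, map_mul, hermStar_realHom, hermStar_realHom, hermStar_C, conj_I, C_neg,
          hermStar_X, Sum.swap_inl] at this
        rw [← this, map_neg]
        ring
    refine ⟨u * x - v * y, u * y + v * x, ?_⟩
    simp only [hX, map_sub, map_add, map_mul]
    linear_combination realHom n v * realHom n y * hI

theorem exists_realHom_eq {f : CPoly n} (hf : hermStar n f = f) : ∃ q, realHom n q = f := by
  obtain ⟨u, v, rfl⟩ := exists_realHom_add_I_mul_realHom f
  refine ⟨u, ?_⟩
  rw [map_add, map_mul, hermStar_realHom, hermStar_realHom, hermStar_C, conj_I, C_neg, neg_mul,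
    add_right_inj, neg_eq_self] at hf
  rw [hf, add_zero]

theorem evalAt_realHom_X_inl (a : Fin n → ℂ) (j : Fin n) :
    evalAt a (realHom n (X (Sum.inl j))) = (a j).re := by
  rw [realHom_X_inl, evalAt_mul, evalAt_add, evalAt_C, evalAt_X_inl, evalAt_X_inr, re_eq_add_conj,
    one_div_mul_eq_div]

theorem evalAt_realHom_X_inr (a : Fin n → ℂ) (j : Fin n) :
    evalAt a (realHom n (X (Sum.inr j))) = (a j).im := by
  rw [realHom_X_inr, evalAt_mul, evalAt_sub, evalAt_C, evalAt_X_inl, evalAt_X_inr, im_eq_sub_conj,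
    one_div_mul_eq_div]

theorem exists_forall_evalAt_realHom_eq (φ : MvPolynomial (Fin n ⊕ Fin n) ℝ →ₐ[ℝ] ℝ) :
    ∃ a : Fin n → ℂ, ∀ q, evalAt a (realHom n q) = φ q := by
  refine ⟨fun j => ⟨φ (X (Sum.inl j)), φ (X (Sum.inr j))⟩, fun q => ?_⟩
  induction q using MvPolynomial.induction_on with
  | C c =>
    rw [realHom_C, evalAt_C, ← MvPolynomial.algebraMap_eq, φ.commutes,
      Algebra.algebraMap_self_apply]
  | add q q' hq hq' => rw [map_add, evalAt_add, hq, hq', map_add, ofReal_add]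
  | mul_X q i hq =>
    rw [map_mul, evalAt_mul, hq, map_mul, ofReal_mul]
    congr 1
    rcases i with j | j
    · exact evalAt_realHom_X_inl _ j
    · exact evalAt_realHom_X_inr _ j

end RealPolynomials

section SigmaH

variable {n : ℕ} {f g : CPoly n}

theorem zero_mem_SigmaH : (0 : CPoly n) ∈ SigmaH n :=
  ⟨0, Fin.elim0, rfl⟩

theorem hol_mul_hermStar_mem_SigmaH (p : MvPolynomial (Fin n) ℂ) :
    hol n p * hermStar n (hol n p) ∈ SigmaH n :=
  ⟨1, fun _ => p, by simp only [Fin.sum_univ_one]⟩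

theorem add_mem_SigmaH (hf : f ∈ SigmaH n) (hg : g ∈ SigmaH n) : f + g ∈ SigmaH n := by
  obtain ⟨k, p, rfl⟩ := hf
  obtain ⟨l, q, rfl⟩ := hg
  exact ⟨k + l, Fin.append p q, by simp only [Fin.sum_univ_add, Fin.append_left, Fin.append_right]⟩

theorem sum_mem_SigmaH {ι : Type*} {s : Finset ι} {f : ι → CPoly n}
    (hf : ∀ i ∈ s, f i ∈ SigmaH n) : ∑ i ∈ s, f i ∈ SigmaH n :=
  Finset.sum_induction f (· ∈ SigmaH n) (fun _ _ => add_mem_SigmaH) zero_mem_SigmaH hf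

theorem mul_mem_SigmaH (hf : f ∈ SigmaH n) (hg : g ∈ SigmaH n) : f * g ∈ SigmaH n := by
  obtain ⟨k, p, rfl⟩ := hf
  obtain ⟨l, q, rfl⟩ := hg
  rw [Finset.sum_mul_sum]
  refine sum_mem_SigmaH fun i _ => sum_mem_SigmaH fun j _ => ?_
  rw [mul_mul_mul_comm, ← map_mul (hermStar n), ← map_mul (hol n)]
  exact hol_mul_hermStar_mem_SigmaH (p i * q j)

theorem C_mem_SigmaH {c : ℝ} (hc : 0 ≤ c) : (C (c : ℂ) : CPoly n) ∈ SigmaH n := by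
  have hsqrt : hol n (C (√c : ℂ)) * hermStar n (hol n (C (√c : ℂ))) = C (c : ℂ) := by
    rw [hol, rename_C, hermStar_C, conj_ofReal, ← C_mul, ← ofReal_mul, Real.mul_self_sqrt hc]
  exact hsqrt ▸ hol_mul_hermStar_mem_SigmaH _

theorem one_mem_SigmaH : (1 : CPoly n) ∈ SigmaH n := by
  simpa only [ofReal_one, C_1] using C_mem_SigmaH (n := n) zero_le_one

theorem hermStar_eq_of_mem_SigmaH (hf : f ∈ SigmaH n) : hermStar n f = f := by
  obtain ⟨k, p, rfl⟩ := hf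
  simp only [map_sum, map_mul, hermStar_hermStar, mul_comm]

theorem re_evalAt_nonneg_of_mem_SigmaH (hf : f ∈ SigmaH n) (a : Fin n → ℂ) :
    0 ≤ (evalAt a f).re := by
  obtain ⟨k, p, rfl⟩ := hf
  simp only [evalAt_sum, evalAt_mul, evalAt_hermStar, mul_conj, re_sum, ofReal_re]
  exact Finset.sum_nonneg fun i _ => normSq_nonneg _

end SigmaH

section HermitianModule

variable {n : ℕ} {I M : Set (CPoly n)}

theorem IsHermitianModule.C_mul_mem (hM : IsHermitianModule n M) {c : ℝ} (hc : 0 ≤ c) {f : CPoly n}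
    (hf : f ∈ M) : C (c : ℂ) * f ∈ M :=
  hM.2.2.2 _ (C_mem_SigmaH hc) f hf

/-- The cone of those elements of `ℝ[x,y]` that lie in the hermitian module `M`. -/
def IsHermitianModule.toPointedCone (hM : IsHermitianModule n M) :
    PointedCone ℝ (MvPolynomial (Fin n ⊕ Fin n) ℝ) where
  carrier := {q | realHom n q ∈ M}
  add_mem' hq hq' := by
    simpa only [Set.mem_ofPred_eq, map_add] using hM.2.2.1 _ hq _ hq'
  zero_mem' := by
    simpa only [Set.mem_ofPred_eq, map_zero, zero_mul] using hM.2.2.2 0 zero_mem_SigmaH 1 hM.2.1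
  smul_mem' := by
    rintro ⟨c, hc⟩ q hq
    change realHom n (c • q) ∈ M
    rw [MvPolynomial.smul_eq_C_mul, map_mul, realHom_C]
    exact hM.C_mul_mem hc hq

theorem IsHermitianModule.mem_toPointedCone (hM : IsHermitianModule n M)
    {q : MvPolynomial (Fin n ⊕ Fin n) ℝ} : q ∈ hM.toPointedCone ↔ realHom n q ∈ M :=
  Iff.rfl

theorem IsHermitianModule.mul_mem_of_mem_SigmaHPlus (hM : IsHermitianModule n M)
    (hI : IsRealIdeal n I) (hIM : I ⊆ M) {t m : CPoly n} (ht : t ∈ SigmaHPlus n I) (hm : m ∈ M) :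
    t * m ∈ M := by
  obtain ⟨s, hs, g, hg, rfl⟩ := ht
  rw [add_mul, mul_comm g]
  exact hM.2.2.1 _ (hM.2.2.2 s hs m hm) _ (hIM (hI.2.2.2 m (hM.1 m hm) g hg))

theorem statement14_general (hM : IsHermitianModule n M) (hI : IsRealIdeal n I) (hIM : I ⊆ M)
    (hA : IsArchSet n (SigmaHPlus n I)) {f : CPoly n} (hf : hermStar n f = f)
    (hpos : ∀ a ∈ XM n M, 0 < (evalAt a f).re) : f ∈ M := by
  obtain ⟨q, rfl⟩ := exists_realHom_eq hf
  refine mem_of_forall_algHom_pos (M := hM.toPointedCone) ?_ (fun x => ?_) fun φ hφ => ?_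
  · rw [hM.mem_toPointedCone, map_one]
    exact hM.2.1
  · obtain ⟨c, hc, -⟩ := hA (realHom n x) (hermStar_realHom x)
    refine ⟨c, fun m hm => ?_⟩
    rw [hM.mem_toPointedCone, map_mul, map_add, MvPolynomial.algebraMap_eq, realHom_C]
    exact hM.mul_mem_of_mem_SigmaHPlus hI hIM hc hm
  · obtain ⟨a, ha⟩ := exists_forall_evalAt_realHom_eq φ
    have haM : a ∈ XM n M := by
      intro g hg
      obtain ⟨u, rfl⟩ := exists_realHom_eq (hM.1 g hg)
      rw [ha, ofReal_re]
      exact hφ u hg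
    simpa only [ha, ofReal_re] using hpos a haM

end HermitianModule

section GeneratedModule

variable {n : ℕ} {I : Set (CPoly n)} {ι : Type*} [Fintype ι] {p : ι → CPoly n}

/-- The hermitian module `I + Σ_h + ∑ i, p_i Σ_h`. -/
def hermitianModule (I : Set (CPoly n)) (p : ι → CPoly n) : Set (CPoly n) :=
  {f | ∃ g ∈ I, ∃ s₀ ∈ SigmaH n, ∃ s : ι → CPoly n,
    (∀ i, s i ∈ SigmaH n) ∧ f = g + s₀ + ∑ i, p i * s i}

theorem subset_hermitianModule (I : Set (CPoly n)) (p : ι → CPoly n) : I ⊆ hermitianModule I p :=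
  fun g hg => ⟨g, hg, 0, zero_mem_SigmaH, 0, fun _ => zero_mem_SigmaH, by simp⟩

theorem SigmaH_subset_hermitianModule (h0 : 0 ∈ I) (p : ι → CPoly n) :
    SigmaH n ⊆ hermitianModule I p :=
  fun s hs => ⟨0, h0, s, hs, 0, fun _ => zero_mem_SigmaH, by simp⟩

theorem mem_hermitianModule_of_generator (h0 : 0 ∈ I) (p : ι → CPoly n) (i : ι) :
    p i ∈ hermitianModule I p := by
  classical
  refine ⟨0, h0, 0, zero_mem_SigmaH, Pi.single i 1, fun j => ?_, by simp [Pi.single_apply]⟩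
  rw [Pi.single_apply]
  split_ifs
  exacts [one_mem_SigmaH, zero_mem_SigmaH]

theorem isHermitianModule_hermitianModule (hI : IsRealIdeal n I)
    (hp : ∀ i, hermStar n (p i) = p i) : IsHermitianModule n (hermitianModule I p) := by
  obtain ⟨hIstar, hI0, hIadd, hImul⟩ := hI
  refine ⟨?_, SigmaH_subset_hermitianModule hI0 p one_mem_SigmaH, ?_, ?_⟩
  · rintro _ ⟨g, hg, s₀, hs₀, s, hs, rfl⟩
    simp only [map_add, map_sum, map_mul, hIstar g hg, hp, hermStar_eq_of_mem_SigmaH hs₀,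
      hermStar_eq_of_mem_SigmaH (hs _)]
  · rintro _ ⟨g, hg, s₀, hs₀, s, hs, rfl⟩ _ ⟨g', hg', s₀', hs₀', s', hs', rfl⟩
    refine ⟨g + g', hIadd g hg g' hg', s₀ + s₀', add_mem_SigmaH hs₀ hs₀', s + s',
      fun i => add_mem_SigmaH (hs i) (hs' i), ?_⟩
    simp only [Pi.add_apply, mul_add, Finset.sum_add_distrib]
    ring
  · rintro t ht _ ⟨g, hg, s₀, hs₀, s, hs, rfl⟩
    refine ⟨t * g, hImul t (hermStar_eq_of_mem_SigmaH ht) g hg, t * s₀, mul_mem_SigmaH ht hs₀,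
      fun i => t * s i, fun i => mul_mem_SigmaH ht (hs i), ?_⟩
    simp only [mul_add, Finset.mul_sum, mul_left_comm t]

theorem XM_subset_VR (hI : IsRealIdeal n I) {M : Set (CPoly n)} (hIM : I ⊆ M) :
    XM n M ⊆ VR n I := by
  intro a ha g hg
  have hneg : -1 * g ∈ I := hI.2.2.2 (-1) (by simp) g hg
  have hle : 0 ≤ (evalAt a (-1 * g)).re := ha _ (hIM hneg)
  have hge : 0 ≤ (evalAt a g).re := ha _ (hIM hg)
  have hminus : evalAt a (-1 : CPoly n) = -1 := by
    simpa using evalAt_C a (-1)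
  rw [evalAt_mul, hminus, neg_one_mul, neg_re, neg_nonneg] at hle
  rw [evalAt_eq_re (hI.1 g hg), le_antisymm hle hge, ofReal_zero]

theorem XM_hermitianModule (hI : IsRealIdeal n I) (hp : ∀ i, hermStar n (p i) = p i) :
    XM n (hermitianModule I p) = VR n I ∩ {a | ∀ i, 0 ≤ (evalAt a (p i)).re} := by
  refine Set.Subset.antisymm (fun a ha => ⟨?_, fun i => ?_⟩) ?_
  · exact XM_subset_VR hI (subset_hermitianModule I p) ha
  · exact ha _ (mem_hermitianModule_of_generator hI.2.1 p i)
  · rintro a ⟨haI, hap⟩ _ ⟨g, hg, s₀, hs₀, s, hs, rfl⟩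
    have hps (i : ι) : 0 ≤ (evalAt a (p i * s i)).re := by
      rw [evalAt_mul, evalAt_eq_re (hp i), re_ofReal_mul]
      exact mul_nonneg (hap i) (re_evalAt_nonneg_of_mem_SigmaH (hs i) a)
    rw [evalAt_add, evalAt_add, haI g hg, zero_add, add_re, evalAt_sum, re_sum]
    exact add_nonneg (re_evalAt_nonneg_of_mem_SigmaH hs₀ a) (Finset.sum_nonneg fun i _ => hps i)

end GeneratedModule

/-- Proposition `vaquillthm`: if `I ⊆ ℝ[x,y]` is an ideal with the archimedean property
(A), then for any `p_1, …, p_r ∈ ℝ[x,y]` the hermitian module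
`M = I + Σ_h + p_1 Σ_h + ⋯ + p_r Σ_h` has the Quillen property on
`X_M = V_ℝ(I) ∩ {p_1 ≥ 0, …, p_r ≥ 0}`. -/
theorem statement14 (n : ℕ) (hn : 0 < n) (I : Set (CPoly n)) (hI : IsRealIdeal n I)
    (hA : IsArchSet n (SigmaHPlus n I)) (r : ℕ) (p : Fin r → CPoly n)
    (hp : ∀ i, hermStar n (p i) = p i) :
    ∀ f : CPoly n, hermStar n f = f →
      (∀ a : Fin n → ℂ, a ∈ VR n I → (∀ i, 0 ≤ (evalAt a (p i)).re) →
        0 < (evalAt a f).re) →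
      ∃ g ∈ I, ∃ s₀ ∈ SigmaH n, ∃ s : Fin r → CPoly n,
        (∀ i, s i ∈ SigmaH n) ∧ f = g + s₀ + ∑ i, p i * s i := by
  intro f hf hpos
  refine statement14_general (isHermitianModule_hermitianModule hI hp)
    hI (subset_hermitianModule I p) hA hf fun a ha => ?_
  obtain ⟨haI, hap⟩ := XM_hermitianModule hI hp ▸ ha
  exact hpos a haI hap

end
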